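/- Fix integers n ≥ 1 and k ≥ 1. For every integer m ≥ 1 and every x ∈ Q_1^m(k), one has the exact formula T_S(w_k)(x) = 1 + k · Σ_{i=1}^{m−1} (2^{kn}/(2^{(k−1)n}+1))^i (the sum is empty when m = 1). -/

import Mathlib

open MeasureTheory Set ENNReal

noncomputable section

/-- The half-open axis-parallel cube with corner `a` and side length `l`. -/
def Cube (n : ℕ) (a : Fin n → ℝ) (l : ℝ) : Set (Fin n → ℝ) :=
  Set.univ.pi fun i => Set.Ico (a i) (a i + l)

/-- The uncentered Hardy–Littlewood maximal function over axis-parallel cubes: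
`Mg(x) = sup_{Q ∋ x} |Q|⁻¹ ∫_Q g`. -/
def MaxFn {n : ℕ} (g : (Fin n → ℝ) → ℝ≥0∞) (x : Fin n → ℝ) : ℝ≥0∞ :=
  ⨆ (a : Fin n → ℝ) (l : ℝ) (_ : 0 < l) (_ : x ∈ Cube n a l),
    (volume (Cube n a l))⁻¹ * ∫⁻ y in Cube n a l, g y

/-- The cube of the sparse family `S` with parameters `k, N`:
`[0, 2^{-N})^n` for `k = 0` and `[2^k, 2^k + 2^{-N})^n` for `k ≥ 1`. -/
def sCube (n k N : ℕ) : Set (Fin n → ℝ) :=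
  Cube n (fun _ => if k = 0 then 0 else (2:ℝ)^k) ((2:ℝ)^(-(N:ℤ)))

/-- The sparse operator `T_S g = Σ_{Q ∈ S} (|Q|⁻¹ ∫_Q g) 1_Q`. -/
def TS {n : ℕ} (g : (Fin n → ℝ) → ℝ≥0∞) (x : Fin n → ℝ) : ℝ≥0∞ :=
  ∑' q : ℕ × ℕ,
    (sCube n q.1 q.2).indicator
      (fun _ => (volume (sCube n q.1 q.2))⁻¹ * ∫⁻ y in sCube n q.1 q.2, g y) x

/-- The `j`-th digit (for `j ≥ 1`) of `t ∈ [0,1)` in base `2^k`, using the expansion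
which is not eventually constant `2^k - 1`. -/
def digit (k j : ℕ) (t : ℝ) : ℤ := ⌊t * 2^(k*j)⌋ % 2^k

/-- `Ω_m(k) ⊆ [0,1)^n`: the points all of whose coordinates have base-`2^k` digits
in `{0, …, 2^{k-1}-1}` for `1 ≤ j ≤ m-1`, with `m`-th digit equal to `2^{k-1}`. -/
def Omega (n k m : ℕ) : Set (Fin n → ℝ) :=
  {x | (∀ i, x i ∈ Set.Ico (0:ℝ) 1) ∧
    ∀ i, (∀ j, 1 ≤ j → j < m → digit k j (x i) < 2^(k-1)) ∧
      digit k m (x i) = 2^(k-1)}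

/-- The weight `w_k = Σ_{m ≥ 1} (2^{kn}/(2^{(k-1)n}+1))^m 1_{Ω_m(k)}`. -/
def wk (n k : ℕ) : (Fin n → ℝ) → ℝ≥0∞ := fun x =>
  ∑' m : ℕ,
    (Omega n k (m+1)).indicator
      (fun _ => ((2:ℝ≥0∞)^(k*n) / ((2:ℝ≥0∞)^((k-1)*n) + 1))^(m+1)) x

/-- `Q_1^m(k) = [2^{-k(m-1)-1}, 2^{-k(m-1)-1} + 2^{-km})^n`. -/
def Q1 (n k m : ℕ) : Set (Fin n → ℝ) :=
  Cube n (fun _ => (2:ℝ)^(-(k*(m-1) : ℤ) - 1)) ((2:ℝ)^(-(k*m : ℤ)))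

/-- `Γ(k) = ⋃_{m ≥ 3} Q_1^m(k)`. -/
def Gamma (n k : ℕ) : Set (Fin n → ℝ) := ⋃ m : ℕ, Q1 n k (m+3)

/-- `A_k = 2^{(k-1)n} (2^{(k-1)n}+1)^2`. -/
def Ak (n k : ℕ) : ℝ≥0∞ := 2^((k-1)*n) * (2^((k-1)*n) + 1)^2

/-- The weight `w(x) = Σ_{k ≥ 3} A_k w_k(x - 2⃗^k) 1_{Γ(k)}(x - 2⃗^k)`. -/
def bigW (n : ℕ) : (Fin n → ℝ) → ℝ≥0∞ := fun x =>
  ∑' k : ℕ,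
    (Gamma n (k+3)).indicator (fun z => Ak n (k+3) * wk n (k+3) z)
      (fun i => x i - (2:ℝ)^(k+3))

/-- The test function `f(x) = Σ_{k ≥ 3} k^{-ε} A_k w_k(x - 2⃗^k)`. -/
def bigF (n : ℕ) (ε : ℝ) : (Fin n → ℝ) → ℝ≥0∞ := fun x =>
  ∑' k : ℕ,
    ((k+3 : ℝ≥0∞) ^ (-ε)) * Ak n (k+3) * wk n (k+3) (fun i => x i - (2:ℝ)^(k+3))

/-- `T` is bounded from `L^p(v)` to `L^p(u)` (for nonnegative functions, which are
required to be supported in `supp v`): there is a finite constant `C` with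
`‖Tf‖_{L^p(u)} ≤ C ‖f‖_{L^p(v)}` for all `f ∈ L^p(v)`. -/
def BddOn {n : ℕ} (T : ((Fin n → ℝ) → ℝ≥0∞) → (Fin n → ℝ) → ℝ≥0∞)
    (p : ℝ) (v u : (Fin n → ℝ) → ℝ≥0∞) : Prop :=
  ∃ C : ℝ≥0∞, C ≠ ∞ ∧ ∀ f : (Fin n → ℝ) → ℝ≥0∞, Measurable f →
    (∀ x, v x = 0 → f x = 0) → (∫⁻ x, f x ^ p * v x) < ∞ →
    ∫⁻ x, T f x ^ p * u x ≤ C ^ p * ∫⁻ x, f x ^ p * v x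

/-- The dual weight `u^{1-p'} 1_{supp u}`. -/
def dualW {n : ℕ} (u : (Fin n → ℝ) → ℝ≥0∞) (q : ℝ) : (Fin n → ℝ) → ℝ≥0∞ :=
  fun x => if u x = 0 then 0 else u x ^ (1 - q)

/-!
Let `c = 2^{kn} / (2^{(k-1)n} + 1)` and let `p` be the least integer with `N ≤ kp`. On `[0, 2^{-N})`
the base-`2^k` digits `1, …, p` are all less than `2^{k-1}`, so `Ω_1, …, Ω_p` miss the cube
`[0, 2^{-N})^n`, and a point `x` of it lies in `Ω_{m+p}` exactly when the fractional part of
`2^{kp} x` lies in `Ω_m`. As `2^{kp-N}` is an integer, the cube consists of whole periods of this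
map, so the average of `w_k` over it is `c^p` times the integral of `w_k` over `[0, 1)^n`. That
integral is a geometric series with ratio `c 2^{-n}` and first term `c 2^{-kn}`; these two numbers
add up to `1`, and so the integral is `1`.

Hence `T_S w_k = ∑_{N ≤ L} c^⌈N/k⌉` on `[0, 2^{-L})^n \ [0, 2^{-L-1})^n`, a set that contains
`Q_1^m(k)` when `L = k(m-1)`; each exponent `1, …, m-1` then occurs `k` times.
-/

lemma volume_fract_preimage_inter_Ico_add_one (B : Set ℝ) (d : ℤ) :
    volume (Int.fract ⁻¹' B ∩ Ico (d : ℝ) (d + 1)) = volume (B ∩ Ico 0 1) := by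
  have translate : Int.fract ⁻¹' B ∩ Ico (d : ℝ) (d + 1)
      = (fun u : ℝ => u + -(d : ℝ)) ⁻¹' (B ∩ Ico 0 1) := by
    ext u
    have fract_eq (hu : u ∈ Ico (d : ℝ) (d + 1)) : Int.fract u = u + -d := by
      rw [← Int.self_sub_floor, Int.floor_eq_on_Ico d u hu, sub_eq_add_neg]
    have mem_iff : u ∈ Ico (d : ℝ) (d + 1) ↔ u + -(d : ℝ) ∈ Ico (0 : ℝ) 1 := by
      simp only [mem_Ico, ← sub_eq_add_neg, sub_nonneg, sub_lt_iff_lt_add']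
    simp only [mem_inter_iff, mem_preimage, ← mem_iff]
    exact and_congr_left fun hu => by rw [fract_eq hu]
  rw [translate, measure_preimage_add_right]

lemma volume_fract_preimage_inter_Ico_natCast {B : Set ℝ} (hB : MeasurableSet B) (M : ℕ) :
    volume (Int.fract ⁻¹' B ∩ Ico (0 : ℝ) M) = M * volume (B ∩ Ico 0 1) := by
  induction M with
  | zero => simp
  | succ M ih =>
    have unit_cell : volume (Int.fract ⁻¹' B ∩ Ico (M : ℝ) (M + 1)) = volume (B ∩ Ico 0 1) := by
      exact_mod_cast volume_fract_preimage_inter_Ico_add_one B M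
    have disjoint_cells : Disjoint (Int.fract ⁻¹' B ∩ Ico (0 : ℝ) M)
        (Int.fract ⁻¹' B ∩ Ico (M : ℝ) (M + 1)) :=
      Ico_disjoint_Ico_same.mono inter_subset_right inter_subset_right
    rw [Nat.cast_succ,
      ← Ico_union_Ico_eq_Ico (Nat.cast_nonneg M) (le_add_of_nonneg_right zero_le_one),
      inter_union_distrib_left,
      measure_union disjoint_cells ((measurable_fract hB).inter measurableSet_Ico), ih, unit_cell,
      Nat.cast_succ, add_one_mul]

lemma volume_fract_mul_preimage_inter_Ico {B : Set ℝ} (hB : MeasurableSet B) {b r : ℝ}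
    (hb : 0 < b) {M : ℕ} (hM : b * r = M) :
    volume ((fun t => Int.fract (b * t)) ⁻¹' B ∩ Ico 0 r)
      = ENNReal.ofReal r * volume (B ∩ Ico 0 1) := by
  have rescale : (fun t => Int.fract (b * t)) ⁻¹' B ∩ Ico 0 r
      = (fun t => b * t) ⁻¹' (Int.fract ⁻¹' B ∩ Ico (0 : ℝ) M) := by
    ext t
    simp only [mem_inter_iff, mem_preimage, mem_Ico, ← hM, mul_nonneg_iff_of_pos_left hb,
      mul_lt_mul_iff_right₀ hb]
  have r_eq : r = b⁻¹ * M := by rw [← hM, inv_mul_cancel_left₀ hb.ne']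
  rw [rescale, Real.volume_preimage_mul_left hb.ne', volume_fract_preimage_inter_Ico_natCast hB,
    abs_of_pos (inv_pos.2 hb), ← mul_assoc, r_eq, ENNReal.ofReal_mul (inv_pos.2 hb).le,
    ENNReal.ofReal_natCast]

section Digits

variable {k j m N p : ℕ} {t : ℝ}

lemma measurable_digit (k j : ℕ) : Measurable (digit k j) :=
  (measurable_of_countable fun z : ℤ => z % 2 ^ k).comp
    (Int.measurable_floor.comp (measurable_id.mul_const _))

lemma digit_one (k : ℕ) (ht : t ∈ Ico (0 : ℝ) 1) : digit k 1 t = ⌊t * 2 ^ k⌋ := by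
  rw [digit, mul_one]
  refine Int.emod_eq_of_lt (Int.floor_nonneg.2 (mul_nonneg ht.1 (by positivity))) ?_
  rw [Int.floor_lt]
  push_cast
  exact mul_lt_of_lt_one_left (by positivity) ht.2

lemma digit_add (hj : 1 ≤ j) (k p : ℕ) (t : ℝ) :
    digit k (j + p) t = digit k j (Int.fract (2 ^ (k * p) * t)) := by
  have shift : Int.fract (2 ^ (k * p) * t) * 2 ^ (k * j)
      = t * 2 ^ (k * (j + p)) - ((⌊2 ^ (k * p) * t⌋ * 2 ^ (k * j) : ℤ) : ℝ) := by
    rw [← Int.self_sub_floor]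
    push_cast
    ring
  obtain ⟨i, rfl⟩ := Nat.exists_eq_add_of_le' hj
  rw [digit, digit, shift, Int.floor_sub_intCast, mul_add_one, pow_add, ← mul_assoc,
    Int.sub_mul_emod_self_right]

lemma digit_lt_of_mem_Ico (ht : t ∈ Ico (0 : ℝ) (2⁻¹ ^ N)) (hj : k * j < N + k) :
    digit k j t < 2 ^ (k - 1) := by
  have small : t * 2 ^ (k * j) < 2 ^ (k - 1) :=
    calc t * 2 ^ (k * j) ≤ t * 2 ^ (N + (k - 1)) :=
          mul_le_mul_of_nonneg_left (pow_le_pow_right₀ one_le_two (by omega)) ht.1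
      _ < 2⁻¹ ^ N * 2 ^ (N + (k - 1)) := mul_lt_mul_of_pos_right ht.2 (by positivity)
      _ = 2 ^ (k - 1) := by rw [pow_add, inv_pow, inv_mul_cancel_left₀ (by positivity)]
  have floor_nonneg : 0 ≤ ⌊t * 2 ^ (k * j)⌋ :=
    Int.floor_nonneg.2 (mul_nonneg ht.1 (by positivity))
  calc digit k j t ≤ ⌊t * 2 ^ (k * j)⌋ := by
        rw [digit, Int.emod_def]
        exact sub_le_self _
          (mul_nonneg (by positivity) (Int.ediv_nonneg floor_nonneg (by positivity)))
    _ < 2 ^ (k - 1) := Int.floor_lt.2 (by exact_mod_cast small)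

lemma digit_one_lt_iff (hk : 1 ≤ k) (ht : t ∈ Ico (0 : ℝ) 1) :
    digit k 1 t < 2 ^ (k - 1) ↔ t < 2⁻¹ := by
  obtain ⟨k, rfl⟩ := Nat.exists_eq_add_of_le' hk
  rw [digit_one _ ht, Int.floor_lt, ← lt_div_iff₀ (by positivity), pow_succ]
  push_cast [Nat.add_sub_cancel]
  rw [div_mul_cancel_left₀ (by positivity)]

lemma digit_one_eq_iff (hk : 1 ≤ k) (ht : t ∈ Ico (0 : ℝ) 1) :
    digit k 1 t = 2 ^ (k - 1) ↔ t ∈ Ico (2⁻¹ : ℝ) (2⁻¹ + 2⁻¹ ^ k) := by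
  obtain ⟨k, rfl⟩ := Nat.exists_eq_add_of_le' hk
  rw [digit_one _ ht, Int.floor_eq_iff, mem_Ico, ← div_le_iff₀ (by positivity),
    ← lt_div_iff₀ (by positivity), add_div, inv_pow, one_div, pow_succ]
  push_cast [Nat.add_sub_cancel]
  rw [div_mul_cancel_left₀ (by positivity)]

/-- The set `digitSet k m ⊆ [0,1)` is the case `n = 1` of `Ω_m(k)`; the set `Ω_m(k) ⊆ ℝⁿ` is its
`n`-th Cartesian power. -/
def digitSet (k m : ℕ) : Set ℝ :=
  {t | t ∈ Ico (0 : ℝ) 1 ∧ (∀ j, 1 ≤ j → j < m → digit k j t < 2 ^ (k - 1)) ∧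
    digit k m t = 2 ^ (k - 1)}

lemma measurableSet_digitSet (k m : ℕ) : MeasurableSet (digitSet k m) := by
  have eq_inter : digitSet k m = Ico (0 : ℝ) 1 ∩
      ((⋂ j, ⋂ (_ : 1 ≤ j), ⋂ (_ : j < m), digit k j ⁻¹' Iio (2 ^ (k - 1))) ∩
        digit k m ⁻¹' {2 ^ (k - 1)}) := by
    ext t
    simp [digitSet]
  rw [eq_inter]
  refine measurableSet_Ico.inter (.inter (.iInter fun j => .iInter fun _ => .iInter fun _ => ?_) ?_)
  · exact measurable_digit k j .of_discrete
  · exact measurable_digit k m .of_discrete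

lemma notMem_digitSet_of_mem_Ico (ht : t ∈ Ico (0 : ℝ) (2⁻¹ ^ N)) (hm : k * m < N + k) :
    t ∉ digitSet k m :=
  fun h => (digit_lt_of_mem_Ico ht hm).ne h.2.2

lemma mem_digitSet_add_iff (hm : 1 ≤ m) (hp : k * p < N + k) (ht : t ∈ Ico (0 : ℝ) (2⁻¹ ^ N)) :
    t ∈ digitSet k (m + p) ↔ Int.fract (2 ^ (k * p) * t) ∈ digitSet k m := by
  constructor
  · rintro ⟨-, low, top⟩
    refine ⟨⟨Int.fract_nonneg _, Int.fract_lt_one _⟩, fun j hj hjm => ?_, ?_⟩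
    · rw [← digit_add hj]
      exact low (j + p) (by omega) (by omega)
    · rwa [← digit_add hm]
  · rintro ⟨-, low, top⟩
    refine ⟨⟨ht.1, ht.2.trans_le (pow_le_one₀ (by norm_num) (by norm_num))⟩, fun j _ hjm => ?_, ?_⟩
    · rcases le_or_gt j p with hjp | hpj
      · exact digit_lt_of_mem_Ico ht ((Nat.mul_le_mul_left k hjp).trans_lt hp)
      · obtain ⟨i, rfl⟩ := Nat.exists_eq_add_of_le' hpj.le
        rw [digit_add (by omega)]
        exact low i (by omega) (by omega)
    · rwa [digit_add hm]

lemma digitSet_one (hk : 1 ≤ k) : digitSet k 1 = Ico (2⁻¹ : ℝ) (2⁻¹ + 2⁻¹ ^ k) := by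
  have pow_le : (2⁻¹ : ℝ) ^ k ≤ 2⁻¹ :=
    pow_le_of_le_one (by norm_num) (by norm_num) (Nat.one_le_iff_ne_zero.1 hk)
  ext t
  constructor
  · rintro ⟨ht, -, top⟩
    exact (digit_one_eq_iff hk ht).1 top
  · intro h
    have ht : t ∈ Ico (0 : ℝ) 1 := ⟨by linarith [h.1], by linarith [h.2]⟩
    exact ⟨ht, fun j _ _ => by omega, (digit_one_eq_iff hk ht).2 h⟩

end Digits

section SliceVolumes

variable {k m N p : ℕ}

lemma ofReal_two_inv_pow (N : ℕ) : ENNReal.ofReal (2⁻¹ ^ N) = 2⁻¹ ^ N := by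
  rw [ENNReal.ofReal_pow (by norm_num), ENNReal.ofReal_inv_of_pos two_pos, ENNReal.ofReal_ofNat]

lemma volume_digitSet_inter_Ico_eq_zero (hm : k * m < N + k) :
    volume (digitSet k m ∩ Ico (0 : ℝ) (2⁻¹ ^ N)) = 0 := by
  have empty : digitSet k m ∩ Ico (0 : ℝ) (2⁻¹ ^ N) = ∅ :=
    eq_empty_of_forall_notMem fun _ ht => notMem_digitSet_of_mem_Ico ht.2 hm ht.1
  rw [empty, measure_empty]

lemma volume_digitSet_add_inter_Ico (hm : 1 ≤ m) (hN : N ≤ k * p) (hp : k * p < N + k) :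
    volume (digitSet k (m + p) ∩ Ico (0 : ℝ) (2⁻¹ ^ N)) = 2⁻¹ ^ N * volume (digitSet k m) := by
  have self_similar : digitSet k (m + p) ∩ Ico (0 : ℝ) (2⁻¹ ^ N)
      = (fun t => Int.fract (2 ^ (k * p) * t)) ⁻¹' digitSet k m ∩ Ico 0 (2⁻¹ ^ N) := by
    ext t
    exact and_congr_left (mem_digitSet_add_iff hm hp)
  have periods : (2 : ℝ) ^ (k * p) * 2⁻¹ ^ N = (2 ^ (k * p - N) : ℕ) := by
    rw [inv_pow, ← pow_sub₀ _ two_ne_zero hN, Nat.cast_pow, Nat.cast_ofNat]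
  have inter_unit : digitSet k m ∩ Ico 0 1 = digitSet k m :=
    inter_eq_left.2 fun _ ht => ht.1
  rw [self_similar, volume_fract_mul_preimage_inter_Ico (measurableSet_digitSet k m) (by positivity)
    periods, ofReal_two_inv_pow, inter_unit]

lemma volume_digitSet_add_one (hk : 1 ≤ k) (m : ℕ) :
    volume (digitSet k (m + 1)) = 2⁻¹ ^ (m + k) := by
  induction m with
  | zero =>
    rw [zero_add, zero_add, digitSet_one hk, Real.volume_Ico, add_sub_cancel_left,
      ofReal_two_inv_pow]
  | succ m ih =>
    have left_half : digitSet k (m + 1 + 1) ⊆ Ico (0 : ℝ) (2⁻¹ ^ 1) := fun t ht =>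
      ⟨ht.1.1, by simpa using (digit_one_lt_iff hk ht.1).1 (ht.2.1 1 le_rfl (by omega))⟩
    rw [← inter_eq_left.2 left_half,
      volume_digitSet_add_inter_Ico (by omega) (by omega) (by omega), ih, ← pow_add]
    congr 1
    ring

end SliceVolumes

/-- The number `2^{kn} / (2^{(k-1)n} + 1)`, whose `m`-th power is the value of `w_k` on `Ω_m(k)`. -/
def wkRatio (n k : ℕ) : ℝ≥0∞ := 2 ^ (k * n) / (2 ^ ((k - 1) * n) + 1)

section WeightAverages

variable {n k N p : ℕ}

lemma wkRatio_mul_pow_add_mul_pow (n : ℕ) (hk : 1 ≤ k) :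
    wkRatio n k * (2⁻¹ ^ k) ^ n + wkRatio n k * 2⁻¹ ^ n = 1 := by
  obtain ⟨k, rfl⟩ := Nat.exists_eq_add_of_le' hk
  have split : (2 : ℝ≥0∞) ^ ((k + 1) * n) * ((2⁻¹ ^ (k + 1)) ^ n + 2⁻¹ ^ n) = 1 + 2 ^ (k * n) := by
    have cancel (a : ℕ) : (2 : ℝ≥0∞) ^ a * 2⁻¹ ^ a = 1 := by
      rw [← mul_pow, ENNReal.mul_inv_cancel two_ne_zero ofNat_ne_top, one_pow]
    rw [mul_add, ← pow_mul, cancel, add_one_mul, pow_add, mul_assoc, cancel, mul_one]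
  rw [← mul_add, wkRatio, Nat.add_sub_cancel, ← ENNReal.mul_div_right_comm, split, add_comm,
    ENNReal.div_self (by simp) (by finiteness)]

lemma Omega_eq_pi (n k m : ℕ) : Omega n k m = univ.pi fun _ => digitSet k m := by
  ext x
  simp only [Omega, digitSet, mem_ofPred_eq, mem_univ_pi, forall_and]

lemma measurableSet_Omega (n k m : ℕ) : MeasurableSet (Omega n k m) := by
  rw [Omega_eq_pi]
  exact .univ_pi fun _ => measurableSet_digitSet k m

lemma sCube_zero (n N : ℕ) : sCube n 0 N = univ.pi fun _ => Ico (0 : ℝ) (2⁻¹ ^ N) := by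
  simp [sCube, Cube]

lemma volume_sCube_zero (n N : ℕ) : volume (sCube n 0 N) = (2⁻¹ ^ N) ^ n := by
  simp only [sCube_zero, volume_pi_pi, Real.volume_Ico, sub_zero, ofReal_two_inv_pow,
    Finset.prod_const, Finset.card_univ, Fintype.card_fin]

lemma setLIntegral_wk_sCube_zero (n k N : ℕ) :
    ∫⁻ y in sCube n 0 N, wk n k y
      = ∑' m, wkRatio n k ^ (m + 1) * volume (digitSet k (m + 1) ∩ Ico (0 : ℝ) (2⁻¹ ^ N)) ^ n := by
  have volume_slice (m : ℕ) : volume (Omega n k m ∩ sCube n 0 N)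
      = volume (digitSet k m ∩ Ico (0 : ℝ) (2⁻¹ ^ N)) ^ n := by
    simp [Omega_eq_pi, sCube_zero, ← pi_inter_distrib, volume_pi_pi]
  simp only [wk, wkRatio]
  rw [lintegral_tsum fun m =>
    (measurable_const.indicator (measurableSet_Omega n k (m + 1))).aemeasurable]
  simp only [lintegral_indicator_const (measurableSet_Omega _ _ _),
    Measure.restrict_apply (measurableSet_Omega _ _ _), volume_slice]

lemma tsum_wkRatio_pow_mul_volume_digitSet_pow (n : ℕ) (hk : 1 ≤ k) :
    ∑' m, wkRatio n k ^ (m + 1) * volume (digitSet k (m + 1)) ^ n = 1 := by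
  set a := wkRatio n k * (2⁻¹ ^ k) ^ n
  set q := wkRatio n k * 2⁻¹ ^ n
  have a_add_q : a + q = 1 := wkRatio_mul_pow_add_mul_pow n hk
  have a_ne_zero : a ≠ 0 := by simp [a, wkRatio, ENNReal.div_eq_zero_iff]
  have a_ne_top : a ≠ ∞ := ne_top_of_le_ne_top one_ne_top (a_add_q ▸ le_self_add)
  have q_ne_top : q ≠ ∞ := ne_top_of_le_ne_top one_ne_top (a_add_q ▸ le_add_self)
  have geometric (m : ℕ) :
      wkRatio n k ^ (m + 1) * volume (digitSet k (m + 1)) ^ n = a * q ^ m := by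
    rw [volume_digitSet_add_one hk]
    ring
  rw [tsum_congr geometric, ENNReal.tsum_mul_left, ENNReal.tsum_geometric,
    ← ENNReal.eq_sub_of_add_eq q_ne_top a_add_q, ENNReal.mul_inv_cancel a_ne_zero a_ne_top]

lemma average_wk_sCube_zero (hn : n ≠ 0) (hN : N ≤ k * p) (hp : k * p < N + k) :
    (volume (sCube n 0 N))⁻¹ * ∫⁻ y in sCube n 0 N, wk n k y = wkRatio n k ^ p := by
  have vanish : ∀ m ∈ Finset.range p, wkRatio n k ^ (m + 1) *
      volume (digitSet k (m + 1) ∩ Ico (0 : ℝ) (2⁻¹ ^ N)) ^ n = 0 := fun m hm => by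
    rw [volume_digitSet_inter_Ico_eq_zero
      ((Nat.mul_le_mul_left k (Finset.mem_range.1 hm)).trans_lt hp), zero_pow hn, mul_zero]
  have rescale (m : ℕ) : wkRatio n k ^ (m + p + 1) *
      volume (digitSet k (m + p + 1) ∩ Ico (0 : ℝ) (2⁻¹ ^ N)) ^ n
      = volume (sCube n 0 N) * wkRatio n k ^ p *
        (wkRatio n k ^ (m + 1) * volume (digitSet k (m + 1)) ^ n) := by
    rw [add_right_comm, volume_digitSet_add_inter_Ico (by omega) hN hp, volume_sCube_zero]
    ring
  rw [setLIntegral_wk_sCube_zero, ← ENNReal.summable.sum_add_tsum_nat_add' (k := p),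
    Finset.sum_eq_zero vanish, zero_add, tsum_congr rescale, ENNReal.tsum_mul_left,
    tsum_wkRatio_pow_mul_volume_digitSet_pow n (by omega), mul_one,
    ENNReal.inv_mul_cancel_left' (by simp [volume_sCube_zero]) (by simp [volume_sCube_zero])]

end WeightAverages

section SparseOperator

variable {n : ℕ} {x : Fin n → ℝ} {L : ℕ}

lemma sCube_zero_antitone (n : ℕ) : Antitone (sCube n 0) := fun N N' h => by
  rw [sCube_zero, sCube_zero]
  exact pi_mono fun _ _ =>
    Ico_subset_Ico_right (pow_le_pow_of_le_one (by norm_num) (by norm_num) h)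

lemma ne_zero_of_notMem_sCube {l N : ℕ} (hx : x ∉ sCube n l N) : n ≠ 0 := by
  rintro rfl
  exact hx fun i => i.elim0

lemma notMem_sCube_of_mem_sCube_zero (hn : n ≠ 0) (hx : x ∈ sCube n 0 0) {l : ℕ} (hl : l ≠ 0)
    (N : ℕ) : x ∉ sCube n l N := by
  intro h
  rw [sCube_zero, pow_zero] at hx
  have lt_one : x ⟨0, Nat.pos_of_ne_zero hn⟩ < 1 := (hx _ (mem_univ _)).2
  have le_coord := (h ⟨0, Nat.pos_of_ne_zero hn⟩ (mem_univ _)).1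
  rw [if_neg hl] at le_coord
  exact (le_coord.trans_lt lt_one).not_ge (one_le_pow₀ one_le_two)

lemma TS_eq_sum_of_mem_sdiff (g : (Fin n → ℝ) → ℝ≥0∞) (hx : x ∈ sCube n 0 L \ sCube n 0 (L + 1)) :
    TS g x = ∑ N ∈ Finset.range (L + 1),
      (volume (sCube n 0 N))⁻¹ * ∫⁻ y in sCube n 0 N, g y := by
  obtain ⟨mem_L, notMem_L⟩ := hx
  have mem_iff (N : ℕ) : x ∈ sCube n 0 N ↔ N < L + 1 :=
    ⟨fun h => lt_of_not_ge fun hLN => notMem_L (sCube_zero_antitone n hLN h),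
      fun h => sCube_zero_antitone n (Nat.le_of_lt_succ h) mem_L⟩
  have notMem_translate (l : ℕ) (hl : l ≠ 0) (N : ℕ) : x ∉ sCube n l N :=
    notMem_sCube_of_mem_sCube_zero (ne_zero_of_notMem_sCube notMem_L)
      ((mem_iff 0).2 L.succ_pos) hl N
  rw [TS, ENNReal.tsum_prod', tsum_eq_single 0 fun l hl =>
    ENNReal.tsum_eq_zero.2 fun N => indicator_of_notMem (notMem_translate l hl N) _,
    tsum_eq_sum (s := Finset.range (L + 1)) fun N hN =>
      indicator_of_notMem (mt (mem_iff N).1 (mt Finset.mem_range.2 hN)) _]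
  exact Finset.sum_congr rfl fun N hN => indicator_of_mem ((mem_iff N).2 (Finset.mem_range.1 hN)) _

lemma Q1_subset_sdiff {k m : ℕ} (hn : 1 ≤ n) (hk : 1 ≤ k) (hm : 1 ≤ m) :
    Q1 n k m ⊆ sCube n 0 (k * (m - 1)) \ sCube n 0 (k * (m - 1) + 1) := by
  obtain ⟨M, rfl⟩ := Nat.exists_eq_add_of_le' hm
  intro x hx
  have corner : (2 : ℝ) ^ (-(k * ((M + 1 : ℕ) - 1) : ℤ) - 1) = 2⁻¹ ^ (k * M + 1) := by
    rw [inv_pow, ← zpow_natCast, ← zpow_neg]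
    push_cast
    ring_nf
  have side : (2 : ℝ) ^ (-(k * (M + 1 : ℕ) : ℤ)) ≤ 2⁻¹ ^ (k * M + 1) := by
    rw [← Nat.cast_mul, zpow_neg, zpow_natCast, ← inv_pow, mul_add_one]
    exact pow_le_pow_of_le_one (by norm_num) (by norm_num) (by omega)
  have half_add_half : (2⁻¹ : ℝ) ^ (k * M + 1) + 2⁻¹ ^ (k * M + 1) = 2⁻¹ ^ (k * M) := by ring
  have coord (i : Fin n) : 2⁻¹ ^ (k * M + 1) ≤ x i ∧ x i < 2⁻¹ ^ (k * M) := by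
    obtain ⟨lower, upper⟩ := hx i (mem_univ i)
    rw [corner] at lower upper
    exact ⟨lower, by linarith⟩
  rw [Nat.add_sub_cancel, mem_sdiff, sCube_zero, sCube_zero]
  exact ⟨fun i _ => ⟨(by positivity : (0 : ℝ) ≤ 2⁻¹ ^ (k * M + 1)).trans (coord i).1, (coord i).2⟩,
    fun h => (h ⟨0, hn⟩ (mem_univ _)).2.not_ge (coord _).1⟩

end SparseOperator

section CeilDiv

variable {k : ℕ}

lemma mul_ceilDiv_lt_add (hk : 1 ≤ k) (N : ℕ) : k * (N ⌈/⌉ k) < N + k := by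
  rw [Nat.ceilDiv_eq_add_pred_div]
  exact (Nat.mul_div_le _ _).trans_lt (by omega)

lemma mul_add_add_one_ceilDiv {s : ℕ} (hs : s < k) (M : ℕ) : (k * M + 1 + s) ⌈/⌉ k = M + 1 := by
  rw [Nat.ceilDiv_eq_add_pred_div, show k * M + 1 + s + k - 1 = s + k * (M + 1) by
    rw [mul_add_one]; omega, Nat.add_mul_div_left _ _ (by omega), Nat.div_eq_of_lt hs, zero_add]

lemma sum_range_mul_add_one_ceilDiv {A : Type*} [AddCommMonoid A] (f : ℕ → A) (k M : ℕ) :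
    ∑ N ∈ Finset.range (k * M + 1), f (N ⌈/⌉ k) = f 0 + k • ∑ i ∈ Finset.range M, f (i + 1) := by
  induction M with
  | zero => simp
  | succ M ih =>
    have block : ∑ s ∈ Finset.range k, f ((k * M + 1 + s) ⌈/⌉ k) = k • f (M + 1) := by
      rw [Finset.sum_congr rfl fun s hs =>
        congrArg f (mul_add_add_one_ceilDiv (Finset.mem_range.1 hs) M), Finset.sum_const,
        Finset.card_range]
    rw [mul_add_one, add_right_comm, Finset.sum_range_add, ih, block, Finset.sum_range_succ,
      nsmul_add, add_assoc]

end CeilDiv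

theorem sparse_wk_exact_formula_general {n k L : ℕ} (hk : 1 ≤ k) {x : Fin n → ℝ}
    (hx : x ∈ sCube n 0 L \ sCube n 0 (L + 1)) :
    TS (wk n k) x = ∑ N ∈ Finset.range (L + 1), wkRatio n k ^ (N ⌈/⌉ k) := by
  rw [TS_eq_sum_of_mem_sdiff _ hx]
  exact Finset.sum_congr rfl fun N _ => average_wk_sCube_zero (ne_zero_of_notMem_sCube hx.2)
    ((ceilDiv_le_iff_le_mul hk).1 le_rfl) (mul_ceilDiv_lt_add hk N)

/-- For `n ≥ 1`, `k ≥ 1`, every `m ≥ 1` and every `x ∈ Q_1^m(k)`: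
`T_S(w_k)(x) = 1 + k Σ_{i=1}^{m-1} (2^{kn}/(2^{(k-1)n}+1))^i`. -/
theorem sparse_wk_exact_formula (n k : ℕ) (hn : 1 ≤ n) (hk : 1 ≤ k)
    (m : ℕ) (hm : 1 ≤ m) (x : Fin n → ℝ) (hx : x ∈ Q1 n k m) :
    TS (wk n k) x
      = 1 + (k : ℝ≥0∞) *
          ∑ i ∈ Finset.range (m-1),
            ((2:ℝ≥0∞)^(k*n) / ((2:ℝ≥0∞)^((k-1)*n) + 1))^(i+1) := by
  rw [sparse_wk_exact_formula_general hk (Q1_subset_sdiff hn hk hm hx),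
    sum_range_mul_add_one_ceilDiv, pow_zero, nsmul_eq_mul, wkRatio]
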